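/- Let F : X → L(H) be a bounded L(H)-valued norm on a complex normed space X. Then F preserves Cauchy sequences if and only if F is continuous on X (with respect to the norm topology of X and the operator-norm topology of L(H)). -/

import Mathlib

/-- An `L(H)`-valued norm on a complex normed space `X`: `F x` is a positive operator,
`F` satisfies the triangle inequality in the Loewner order (`S ≤ T` iff `T - S` is positive),
`F` is absolutely homogeneous, and `F x = 0` iff `x = 0`. -/
structure IsOpValuedNorm {X H : Type*} [NormedAddCommGroup X] [NormedSpace ℂ X]
    [NormedAddCommGroup H] [InnerProductSpace ℂ H] [CompleteSpace H]
    (F : X → H →L[ℂ] H) : Prop where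
  isPositive : ∀ x, (F x).IsPositive
  triangle : ∀ x y, (F x + F y - F (x + y)).IsPositive
  smul_eq : ∀ (c : ℂ) (x : X), F (c • x) = ‖c‖ • F x
  eq_zero_iff : ∀ x, F x = 0 ↔ x = 0

/-!
The Loewner inequalities `F x ≤ F (x - y) + F y` and `F y ≤ F (y - x) + F x = F (x - y) + F x` give
`-F (x - y) ≤ F x - F y ≤ F (x - y)`. The norm of a symmetric operator is the supremum of its
absolute Rayleigh quotients, hence `‖F x - F y‖ ≤ ‖F (x - y)‖`. Since `F 0 = 0`, continuity of `F`
at `0` is therefore already uniform continuity, which preserves Cauchy sequences. Conversely, if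
`u n → x`, then the interleaved sequence `u 0, x, u 1, x, …` is Cauchy; its image is Cauchy with a
subsequence constantly equal to `F x`, so `F (u n) → F x`.
-/

open Filter Topology Uniformity

theorem seqContinuous_of_forall_cauchySeq_comp {α β : Type*} [UniformSpace α] [UniformSpace β]
    {f : α → β} (hf : ∀ u : ℕ → α, CauchySeq u → CauchySeq (fun n => f (u n))) :
    SeqContinuous f := by
  intro u x hu
  let v : ℕ → α := fun n => if Even n then u (n / 2) else x
  have hv : Tendsto v atTop (𝓝 x) :=
    (hu.comp (Nat.tendsto_div_const_atTop two_ne_zero)).if' tendsto_const_nhds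
  have hdouble : Tendsto (fun n : ℕ => 2 * n) atTop atTop :=
    (strictMono_mul_left_of_pos two_pos).tendsto_atTop
  have hodd (n : ℕ) : f (v (2 * n + 1)) = f x := by simp [v]
  have heven (n : ℕ) : f (v (2 * n)) = f (u n) := by simp [v]
  have hfv : Tendsto (f ∘ v) atTop (𝓝 (f x)) :=
    tendsto_nhds_of_cauchySeq_of_subseq (hf v hv.cauchySeq)
      ((tendsto_add_atTop_nat 1).comp hdouble) (tendsto_const_nhds.congr fun n => (hodd n).symm)
  exact (hfv.comp hdouble).congr heven

section RCLike

variable {𝕜 E : Type*} [RCLike 𝕜] [NormedAddCommGroup E] [InnerProductSpace 𝕜 E]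

theorem isSymmetric_of_neg_le_of_le {S T : E →L[𝕜] E} (hneg : -T ≤ S) (hle : S ≤ T) :
    S.IsSymmetric := by
  intro x y
  have hadd := ((ContinuousLinearMap.le_def _ _).mp hneg).isSymmetric x y
  have hsub := ((ContinuousLinearMap.le_def _ _).mp hle).isSymmetric x y
  simp only [ContinuousLinearMap.coe_coe, sub_apply, neg_apply, inner_sub_left, inner_sub_right,
    inner_neg_left, inner_neg_right] at hadd hsub ⊢
  linear_combination (hadd - hsub) / 2

theorem opNorm_le_opNorm_of_neg_le_of_le {S T : E →L[𝕜] E} (hneg : -T ≤ S) (hle : S ≤ T) :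
    ‖S‖ ≤ ‖T‖ := by
  have habs (x : E) : |S.reApplyInnerSelf x| ≤ T.reApplyInnerSelf x := by
    have hadd := ((ContinuousLinearMap.le_def _ _).mp hneg).re_inner_nonneg_left x
    have hsub := ((ContinuousLinearMap.le_def _ _).mp hle).re_inner_nonneg_left x
    simp only [sub_apply, neg_apply, inner_sub_left, inner_neg_left, map_sub, map_neg] at hadd hsub
    rw [S.reApplyInnerSelf_apply, T.reApplyInnerSelf_apply]
    exact abs_le.mpr ⟨by linarith, by linarith⟩
  rw [S.norm_eq_iSup_rayleighQuotient (isSymmetric_of_neg_le_of_le hneg hle)]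
  refine ciSup_le fun x => ?_
  calc |S.rayleighQuotient x| = |S.reApplyInnerSelf x| / ‖x‖ ^ 2 := by
        rw [ContinuousLinearMap.rayleighQuotient, abs_div, abs_sq]
    _ ≤ T.rayleighQuotient x := by
        rw [ContinuousLinearMap.rayleighQuotient]
        gcongr
        exact habs x
    _ ≤ ‖T‖ := (le_abs_self _).trans (T.rayleighQuotient_le_norm x)

/-- An operator-valued seminorm on an additive group: the analogue of `AddGroupSeminorm` with values
in the operators on `E` under the Loewner order. It abstracts the additive part of `IsOpValuedNorm`.
Positivity is not a field because `0 = F (x - x) ≤ F x + F (-x) = 2 • F x`. -/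
structure IsOpValuedAddGroupSeminorm {G : Type*} [AddGroup G] (F : G → E →L[𝕜] E) : Prop where
  map_zero : F 0 = 0
  add_le : ∀ x y, F (x + y) ≤ F x + F y
  map_neg : ∀ x, F (-x) = F x

namespace IsOpValuedAddGroupSeminorm

variable {G : Type*} [AddGroup G] {F : G → E →L[𝕜] E}

theorem sub_le_map_sub (hF : IsOpValuedAddGroupSeminorm F) (x y : G) :
    F x - F y ≤ F (x - y) := by
  simpa [ContinuousLinearMap.le_def, sub_sub_eq_add_sub] using hF.add_le (x - y) y

theorem map_sub_rev (hF : IsOpValuedAddGroupSeminorm F) (x y : G) : F (x - y) = F (y - x) := by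
  rw [← neg_sub, hF.map_neg]

theorem neg_map_sub_le_sub (hF : IsOpValuedAddGroupSeminorm F) (x y : G) :
    -F (x - y) ≤ F x - F y := by
  have hswap : F x - F y - -F (x - y) = F (y - x) - (F y - F x) := by
    rw [hF.map_sub_rev x y]
    abel
  rw [ContinuousLinearMap.le_def, hswap]
  exact hF.sub_le_map_sub y x

theorem norm_sub_le_norm_map_sub (hF : IsOpValuedAddGroupSeminorm F) (x y : G) :
    ‖F x - F y‖ ≤ ‖F (x - y)‖ :=
  opNorm_le_opNorm_of_neg_le_of_le (hF.neg_map_sub_le_sub x y) (hF.sub_le_map_sub x y)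

theorem uniformContinuous_of_continuousAt_zero [UniformSpace G] [IsRightUniformAddGroup G]
    (hF : IsOpValuedAddGroupSeminorm F) (hcont : ContinuousAt F 0) : UniformContinuous F := by
  have hsub : Tendsto (fun p : G × G => p.1 - p.2) (𝓤 G) (𝓝 0) := by
    rw [uniformity_eq_comap_nhds_zero_swapped]
    exact tendsto_comap
  have hnorm : Tendsto (fun p : G × G => ‖F (p.1 - p.2)‖) (𝓤 G) (𝓝 0) := by
    simpa [hF.map_zero] using (hcont.tendsto.comp hsub).norm
  refine tendsto_uniformity_iff_dist_tendsto_zero.mpr (squeeze_zero (fun _ => dist_nonneg) ?_ hnorm)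
  intro p
  simpa only [dist_eq_norm] using hF.norm_sub_le_norm_map_sub p.1 p.2

end IsOpValuedAddGroupSeminorm

theorem opValuedNorm_preserves_cauchy_iff_continuous_general {G : Type*} [AddGroup G]
    [UniformSpace G] [IsRightUniformAddGroup G] [SequentialSpace G] {F : G → E →L[𝕜] E}
    (hF : IsOpValuedAddGroupSeminorm F) :
    (∀ u : ℕ → G, CauchySeq u → CauchySeq (fun n => F (u n))) ↔ Continuous F :=
  ⟨fun h => (seqContinuous_of_forall_cauchySeq_comp h).continuous,
    fun h _ hu => hu.map (hF.uniformContinuous_of_continuousAt_zero h.continuousAt)⟩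

end RCLike

theorem IsOpValuedNorm.isOpValuedAddGroupSeminorm {X H : Type*} [NormedAddCommGroup X]
    [NormedSpace ℂ X] [NormedAddCommGroup H] [InnerProductSpace ℂ H] [CompleteSpace H]
    {F : X → H →L[ℂ] H} (hF : IsOpValuedNorm F) : IsOpValuedAddGroupSeminorm F where
  map_zero := (hF.eq_zero_iff 0).mpr rfl
  add_le := hF.triangle
  map_neg x := by simpa using hF.smul_eq (-1) x

/-- A bounded `L(H)`-valued norm `F` on a complex normed space `X` preserves Cauchy
sequences if and only if it is continuous on `X`. -/
theorem opValuedNorm_preserves_cauchy_iff_continuous {X H : Type*} [NormedAddCommGroup X] [NormedSpace ℂ X]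
    [NormedAddCommGroup H] [InnerProductSpace ℂ H] [CompleteSpace H] [Nontrivial H]
    (F : X → H →L[ℂ] H) (hF : IsOpValuedNorm F)
    (hbdd : ∃ M : ℝ, ∀ x : X, ‖x‖ = 1 → ‖F x‖ ≤ M) :
    (∀ u : ℕ → X, CauchySeq u → CauchySeq (fun n => F (u n))) ↔ Continuous F :=
  opValuedNorm_preserves_cauchy_iff_continuous_general hF.isOpValuedAddGroupSeminorm
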